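/- Existence and uniqueness of the refracted direction: Let F₁ and F₂ be Minkowski norms on ℝ² that agree on the line spanned by a nonzero vector v (that is, F₁(s·v) = F₂(s·v) for all s ∈ ℝ), and let φ : ℝ² → ℝ be a nonzero linear functional with φ(v) = 0. Then for every F₁-unit vector u⁻ with φ(u⁻) ≥ 0 there exists a unique F₂-unit vector u⁺ with φ(u⁺) ≥ 0 such that ⟨u⁻, v⟩_{u⁻}^{F₁} = ⟨u⁺, v⟩_{u⁺}^{F₂}. -/

import Mathlib

/-!
Write `G = F²` and `L_y = ½ DG(y)`. Since `DG` is positively homogeneous of degree one, Euler's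
identity gives `⟨y,w⟩_y = L_y(w)` and `L_y(y) = F(y)²`. Positive definiteness of the Hessian makes
`G` strictly convex along segments avoiding the origin, which yields the fundamental inequality
`L_w(u) < 1` for distinct unit vectors `u`, `w` (`half_fderiv_lt_one`), hence
`L_w(x) ≤ F(x)` for `w` unit (`half_fderiv_le`).

*Existence.* By the fundamental inequality, `c = ⟨u⁻,v⟩` lies in `[-F₁(-v), F₁(v)]`, which is
`[-F₂(-v), F₂(v)]`. The degree-zero homogeneous function `y ↦ L_y(v) / F₂(y)` takes the values
`F₂(v)` and `-F₂(-v)` at `v` and `-v`, so it takes the value `c` on a path from `v` to `-v` inside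
the half plane `φ ≥ 0` avoiding the origin; normalize the point found.

*Uniqueness.* If `u ≠ w` are two solutions, `ψ = 2 (L_u - L_w)` vanishes at `v`, so it is a multiple
of `φ`. But `ψ(u) = 2 (1 - L_w(u)) > 0 > 2 (L_u(w) - 1) = ψ(w)`, whereas `φ(u), φ(w) ≥ 0`.
-/

/-- One half of the second Fréchet derivative of `F²` at `y`, evaluated at `(u, w)`:
the fundamental bilinear form `⟨u,w⟩_y^F` associated to a Minkowski norm. -/
noncomputable def minkHess {V : Type*} [NormedAddCommGroup V] [NormedSpace ℝ V]
    (F : V → ℝ) (y u w : V) : ℝ :=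
  (1 / 2) * fderiv ℝ (fun z => fderiv ℝ (fun x => F x ^ 2) z) y u w

/-- `F` is a Minkowski norm on `V`. -/
structure IsMinkowskiNorm {V : Type*} [NormedAddCommGroup V] [NormedSpace ℝ V]
    (F : V → ℝ) : Prop where
  continuous : Continuous F
  nonneg : ∀ y : V, 0 ≤ F y
  pos : ∀ y : V, y ≠ 0 → 0 < F y
  smooth : ContDiffOn ℝ (⊤ : ℕ∞) F {(0 : V)}ᶜ
  homog : ∀ l : ℝ, 0 ≤ l → ∀ y : V, F (l • y) = l * F y
  posdef : ∀ y : V, y ≠ 0 → ∀ u : V, u ≠ 0 → 0 < minkHess F y u u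

namespace IsMinkowskiNorm

variable {V : Type*} [NormedAddCommGroup V] [NormedSpace ℝ V] {F : V → ℝ}

theorem contDiffAt_sq (hF : IsMinkowskiNorm F) {y : V} (hy : y ≠ 0) :
    ContDiffAt ℝ (⊤ : ℕ∞) (fun x => F x ^ 2) y :=
  (hF.smooth.contDiffAt (isOpen_compl_singleton.mem_nhds hy)).pow 2

theorem hasFDerivAt_sq (hF : IsMinkowskiNorm F) {y : V} (hy : y ≠ 0) :
    HasFDerivAt (fun x => F x ^ 2) (fderiv ℝ (fun x => F x ^ 2) y) y :=
  ((hF.contDiffAt_sq hy).differentiableAt (by simp)).hasFDerivAt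

theorem hasFDerivAt_fderiv_sq (hF : IsMinkowskiNorm F) {y : V} (hy : y ≠ 0) :
    HasFDerivAt (fun z => fderiv ℝ (fun x => F x ^ 2) z)
      (fderiv ℝ (fun z => fderiv ℝ (fun x => F x ^ 2) z) y) y :=
  (((hF.contDiffAt_sq hy).fderiv_right (m := 1) (by norm_cast)).differentiableAt
    (by simp)).hasFDerivAt

theorem fderiv_sq_smul (hF : IsMinkowskiNorm F) {l : ℝ} (hl : 0 < l) (y : V) :
    fderiv ℝ (fun x => F x ^ 2) (l • y) = l • fderiv ℝ (fun x => F x ^ 2) y := by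
  have h1 := fderiv_comp_smul (𝕜 := ℝ) (f := fun x => F x ^ 2) (x := y) l
  have h2 : (fun x => F (l • x) ^ 2) = fun x => ((l ^ 2) • fun x => F x ^ 2) x := by
    funext x
    rw [hF.homog l hl.le, Pi.smul_apply, smul_eq_mul]
    ring
  rw [h2, fderiv_const_smul_field] at h1
  apply smul_right_injective _ hl.ne'
  simp only
  rw [← h1, smul_smul, sq, Pi.smul_apply]

/-- Euler's identity for the degree-two homogeneous function `F²`. -/
theorem fderiv_sq_self (hF : IsMinkowskiNorm F) {y : V} (hy : y ≠ 0) :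
    fderiv ℝ (fun x => F x ^ 2) y y = 2 * F y ^ 2 := by
  have hl : HasDerivAt (fun l : ℝ => l • y) y 1 := by
    simpa using (hasDerivAt_id (1 : ℝ)).smul_const y
  have h1 : HasDerivAt (fun l : ℝ => F (l • y) ^ 2) (fderiv ℝ (fun x => F x ^ 2) y y) 1 := by
    have := hF.hasFDerivAt_sq (y := (1 : ℝ) • y) (by simpa using hy)
    simpa [Function.comp_def] using this.comp_hasDerivAt (1 : ℝ) hl
  have h2 : HasDerivAt (fun l : ℝ => l ^ 2 * F y ^ 2) (2 * F y ^ 2) 1 := by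
    simpa using (hasDerivAt_pow 2 (1 : ℝ)).mul_const (F y ^ 2)
  refine h1.unique (h2.congr_of_eventuallyEq ?_)
  filter_upwards [lt_mem_nhds (zero_lt_one (α := ℝ))] with l hl
  rw [hF.homog l hl.le]
  ring

/-- Euler's identity for the degree-one homogeneous function `D(F²)`. -/
theorem minkHess_self (hF : IsMinkowskiNorm F) {y : V} (hy : y ≠ 0) (w : V) :
    minkHess F y y w = 1 / 2 * fderiv ℝ (fun x => F x ^ 2) y w := by
  have hl : HasDerivAt (fun l : ℝ => l • y) y 1 := by
    simpa using (hasDerivAt_id (1 : ℝ)).smul_const y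
  have h1 : HasDerivAt (fun l : ℝ => fderiv ℝ (fun x => F x ^ 2) (l • y))
      (fderiv ℝ (fun z => fderiv ℝ (fun x => F x ^ 2) z) y y) 1 := by
    have := hF.hasFDerivAt_fderiv_sq (y := (1 : ℝ) • y) (by simpa using hy)
    simpa only [Function.comp_def, one_smul] using this.comp_hasDerivAt (1 : ℝ) hl
  have h2 : HasDerivAt (fun l : ℝ => l • fderiv ℝ (fun x => F x ^ 2) y)
      (fderiv ℝ (fun x => F x ^ 2) y) 1 := by
    simpa using (hasDerivAt_id (1 : ℝ)).smul_const (fderiv ℝ (fun x => F x ^ 2) y)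
  have h3 : fderiv ℝ (fun z => fderiv ℝ (fun x => F x ^ 2) z) y y
      = fderiv ℝ (fun x => F x ^ 2) y := by
    refine h1.unique (h2.congr_of_eventuallyEq ?_)
    filter_upwards [lt_mem_nhds (zero_lt_one (α := ℝ))] with l hl
    exact hF.fderiv_sq_smul hl y
  rw [minkHess, h3]

theorem ne_zero_of_unit (hF : IsMinkowskiNorm F) {u : V} (hu : F u = 1) : u ≠ 0 := by
  rintro rfl
  have := hF.homog 0 le_rfl 0
  simp [hu] at this

/-- Strict convexity of `F²` along a segment avoiding the origin: the graph lies strictly above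
the tangent line at the initial point. -/
theorem sq_gt_tangent (hF : IsMinkowskiNorm F) {u w : V} (huw : u ≠ w)
    (hseg : ∀ t ∈ Set.Icc (0 : ℝ) 1, w + t • (u - w) ≠ 0) :
    F w ^ 2 + fderiv ℝ (fun x => F x ^ 2) w (u - w) < F u ^ 2 := by
  have hline : ∀ t : ℝ, HasDerivAt (fun t : ℝ => w + t • (u - w)) (u - w) t := fun t => by
    simpa using ((hasDerivAt_id t).smul_const (u - w)).const_add w
  have hg : ∀ t ∈ Set.Icc (0 : ℝ) 1, HasDerivAt (fun t : ℝ => F (w + t • (u - w)) ^ 2)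
      (fderiv ℝ (fun x => F x ^ 2) (w + t • (u - w)) (u - w)) t := fun t ht =>
    HasFDerivAt.comp_hasDerivAt (l := fun x => F x ^ 2) t (hF.hasFDerivAt_sq (hseg t ht)) (hline t)
  have hg' : ∀ t ∈ Set.Icc (0 : ℝ) 1,
      HasDerivAt (fun t : ℝ => fderiv ℝ (fun x => F x ^ 2) (w + t • (u - w)) (u - w))
      (fderiv ℝ (fun z => fderiv ℝ (fun x => F x ^ 2) z) (w + t • (u - w)) (u - w) (u - w)) t :=
    fun t ht => by
      have := ((hF.hasFDerivAt_fderiv_sq (hseg t ht)).comp_hasDerivAt t (hline t))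
      simpa using this.clm_apply (hasDerivAt_const t (u - w))
  obtain ⟨s, hs, hs'⟩ := exists_hasDerivAt_eq_slope _ _ (zero_lt_one (α := ℝ))
    (fun t ht => (hg t ht).continuousAt.continuousWithinAt)
    (fun t ht => hg t (Set.Ioo_subset_Icc_self ht))
  have hsub : Set.Icc 0 s ⊆ Set.Icc (0 : ℝ) 1 := Set.Icc_subset_Icc_right hs.2.le
  obtain ⟨r, hr, hr'⟩ := exists_hasDerivAt_eq_slope _ _ hs.1
    (fun t ht => (hg' t (hsub ht)).continuousAt.continuousWithinAt)
    (fun t ht => hg' t (hsub (Set.Ioo_subset_Icc_self ht)))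
  have hpos := hF.posdef _ (hseg r (hsub (Set.Ioo_subset_Icc_self hr))) (u - w)
    (sub_ne_zero.2 huw)
  rw [minkHess, hr', ← mul_div_assoc, sub_zero] at hpos
  have hpos' := (div_pos_iff_of_pos_right hs.1).1 hpos
  simp only [zero_smul, add_zero, one_smul, add_sub_cancel, sub_zero, div_one] at hs' hpos'
  linarith

/-- The strict fundamental inequality `⟨w,u⟩_w < F(w) F(u)` for distinct unit vectors. -/
theorem half_fderiv_lt_one (hF : IsMinkowskiNorm F) {u w : V} (hu : F u = 1) (hw : F w = 1)
    (huw : u ≠ w) : 1 / 2 * fderiv ℝ (fun x => F x ^ 2) w u < 1 := by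
  have hw0 := hF.ne_zero_of_unit hw
  have hself := hF.fderiv_sq_self hw0
  rw [hw] at hself
  by_cases hseg : ∀ t ∈ Set.Icc (0 : ℝ) 1, w + t • (u - w) ≠ 0
  · have := hF.sq_gt_tangent huw hseg
    rw [map_sub, hself, hu, hw] at this
    linarith
  · -- The segment meets the origin only if `u` is a negative multiple of `w`.
    push Not at hseg
    obtain ⟨t, ht, h0⟩ := hseg
    have h1 : fderiv ℝ (fun x => F x ^ 2) w (w + t • (u - w)) = 0 := by rw [h0, map_zero]
    rw [map_add, map_smul, map_sub, hself, smul_eq_mul] at h1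
    by_contra! hcon
    nlinarith [mul_nonneg ht.1 (by linarith : 0 ≤ fderiv ℝ (fun x => F x ^ 2) w u - 2)]

theorem half_fderiv_le (hF : IsMinkowskiNorm F) {w x : V} (hw : F w = 1) (hx : x ≠ 0) :
    1 / 2 * fderiv ℝ (fun x => F x ^ 2) w x ≤ F x := by
  have hpos := hF.pos x hx
  have hunit : F ((F x)⁻¹ • x) = 1 := by
    rw [hF.homog _ (inv_nonneg.2 hpos.le), inv_mul_cancel₀ hpos.ne']
  have key : 1 / 2 * fderiv ℝ (fun x => F x ^ 2) w ((F x)⁻¹ • x) ≤ 1 := by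
    by_cases h : (F x)⁻¹ • x = w
    · rw [h, hF.fderiv_sq_self (hF.ne_zero_of_unit hw), hw]
      norm_num
    · exact (hF.half_fderiv_lt_one hunit hw h).le
  rw [map_smul, smul_eq_mul, mul_left_comm, inv_mul_le_iff₀ hpos, mul_one] at key
  exact key

end IsMinkowskiNorm

theorem exists_smul_of_ker (v : EuclideanSpace ℝ (Fin 2)) (hv : v ≠ 0)
    (φ : EuclideanSpace ℝ (Fin 2) →ₗ[ℝ] ℝ) (hφ : φ ≠ 0) (hφv : φ v = 0)
    (x : EuclideanSpace ℝ (Fin 2)) (hx : φ x = 0) : ∃ c : ℝ, c • v = x := by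
  have h1 := Module.Dual.finrank_ker_add_one_of_ne_zero (f := φ) hφ
  rw [finrank_euclideanSpace_fin] at h1
  have h2 : Module.finrank ℝ (LinearMap.ker φ) = 1 := by omega
  obtain ⟨c, hc⟩ := (finrank_eq_one_iff_of_nonzero' (⟨v, hφv⟩ : LinearMap.ker φ)
    (by simpa [Subtype.ext_iff] using hv)).1 h2 ⟨x, hx⟩
  exact ⟨c, congrArg Subtype.val hc⟩

/-- Existence and uniqueness of the refracted direction. -/
theorem refracted_direction_exists_unique
    (F₁ F₂ : EuclideanSpace ℝ (Fin 2) → ℝ)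
    (hF₁ : IsMinkowskiNorm F₁) (hF₂ : IsMinkowskiNorm F₂)
    (v : EuclideanSpace ℝ (Fin 2)) (hv : v ≠ 0)
    (hagree : ∀ s : ℝ, F₁ (s • v) = F₂ (s • v))
    (φ : EuclideanSpace ℝ (Fin 2) →ₗ[ℝ] ℝ) (hφ : φ ≠ 0) (hφv : φ v = 0)
    (um : EuclideanSpace ℝ (Fin 2)) (hum : F₁ um = 1) (hφum : 0 ≤ φ um) :
    ∃! up : EuclideanSpace ℝ (Fin 2),
      F₂ up = 1 ∧ 0 ≤ φ up ∧ minkHess F₁ um um v = minkHess F₂ up up v := by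
  have hv' : -v ≠ 0 := neg_ne_zero.2 hv
  refine existsUnique_of_exists_of_unique ?_ ?_
  · have hag1 : F₁ v = F₂ v := by simpa using hagree 1
    have hag2 : F₁ (-v) = F₂ (-v) := by simpa using hagree (-1)
    obtain ⟨n, hn⟩ : ∃ n, φ n = 1 := LinearMap.surjective hφ 1
    have hupper := hF₁.half_fderiv_le hum hv
    have hlower := hF₁.half_fderiv_le hum hv'
    rw [map_neg] at hlower
    rw [← hF₁.minkHess_self (hF₁.ne_zero_of_unit hum), hag1] at hupper
    rw [mul_neg, ← hF₁.minkHess_self (hF₁.ne_zero_of_unit hum), hag2] at hlower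
    -- A parabolic arc from `v` to `-v` through the half plane `φ ≥ 0`.
    let p : ℝ → EuclideanSpace ℝ (Fin 2) := fun t => (1 - 2 * t) • v + (t * (1 - t)) • n
    have hφp : ∀ t, φ (p t) = t * (1 - t) := fun t => by simp [p, hφv, hn]
    have hp0 : p 0 = v := by simp [p]
    have hp1 : p 1 = -v := by
      simp only [p]
      norm_num
    have hp : ∀ t, p t ≠ 0 := by
      intro t h
      have h1 : t * (1 - t) = 0 := by rw [← hφp, h, map_zero]
      rcases mul_eq_zero.1 h1 with h2 | h2
      · rw [h2, hp0] at h
        exact hv h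
      · rw [← sub_eq_zero.1 h2, hp1] at h
        exact hv' h
    have hpc : Continuous p := by fun_prop
    let H : ℝ → ℝ := fun t => 1 / 2 * fderiv ℝ (fun x => F₂ x ^ 2) (p t) v / F₂ (p t)
    have hHc : Continuous H := by
      refine Continuous.div ?_ (hF₂.continuous.comp hpc) fun t => (hF₂.pos _ (hp t)).ne'
      refine continuous_const.mul (Continuous.clm_apply ?_ continuous_const)
      refine continuous_iff_continuousAt.2 fun t => ?_
      exact ContinuousAt.comp (g := fun z => fderiv ℝ (fun x => F₂ x ^ 2) z)
        (hF₂.hasFDerivAt_fderiv_sq (hp t)).continuousAt hpc.continuousAt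
    have hH0 : H 0 = F₂ v := by
      have := (hF₂.pos v hv).ne'
      simp only [H, hp0, hF₂.fderiv_sq_self hv]
      field_simp
    have hH1 : H 1 = -F₂ (-v) := by
      have := (hF₂.pos _ hv').ne'
      have h2 := hF₂.fderiv_sq_self hv'
      rw [map_neg, neg_eq_iff_eq_neg] at h2
      simp only [H, hp1, h2]
      field_simp
    obtain ⟨t, ht, hHt⟩ := intermediate_value_Icc' (zero_le_one (α := ℝ)) hHc.continuousOn
      (show minkHess F₁ um um v ∈ Set.Icc (H 1) (H 0) by
        rw [hH0, hH1]
        exact ⟨by linarith, hupper⟩)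
    have hpos := hF₂.pos _ (hp t)
    have hunit : F₂ ((F₂ (p t))⁻¹ • p t) = 1 := by
      rw [hF₂.homog _ (inv_nonneg.2 hpos.le), inv_mul_cancel₀ hpos.ne']
    refine ⟨(F₂ (p t))⁻¹ • p t, hunit, ?_, ?_⟩
    · rw [map_smul, hφp, smul_eq_mul]
      exact mul_nonneg (inv_nonneg.2 hpos.le) (mul_nonneg ht.1 (sub_nonneg.2 ht.2))
    · rw [hF₂.minkHess_self (hF₂.ne_zero_of_unit hunit), hF₂.fderiv_sq_smul (inv_pos.2 hpos),
        ← hHt]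
      simp only [H, smul_apply, smul_eq_mul]
      ring
  · rintro u w ⟨hu, hφu, hu'⟩ ⟨hw, hφw, hw'⟩
    by_contra huw
    have hu0 := hF₂.ne_zero_of_unit hu
    have hw0 := hF₂.ne_zero_of_unit hw
    have hker := exists_smul_of_ker v hv φ hφ hφv
    rw [hu', hF₂.minkHess_self hu0, hF₂.minkHess_self hw0] at hw'
    have hlt1 := hF₂.half_fderiv_lt_one hu hw huw
    have hlt2 := hF₂.half_fderiv_lt_one hw hu (Ne.symm huw)
    have hsu := hF₂.fderiv_sq_self hu0
    have hsw := hF₂.fderiv_sq_self hw0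
    rw [hu] at hsu
    rw [hw] at hsw
    obtain ⟨ψ, hψ⟩ : ∃ ψ : EuclideanSpace ℝ (Fin 2) →L[ℝ] ℝ,
      ψ = fderiv ℝ (fun x => F₂ x ^ 2) u - fderiv ℝ (fun x => F₂ x ^ 2) w := ⟨_, rfl⟩
    have hψv : ψ v = 0 := by
      rw [hψ, sub_apply]
      linarith
    have hψu : 0 < ψ u := by
      rw [hψ, sub_apply]
      linarith
    have hψw : ψ w < 0 := by
      rw [hψ, sub_apply]
      linarith
    -- `φ(u) w - φ(w) u` lies in `ker φ = ℝ v`, hence in `ker ψ`.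
    obtain ⟨c, hc⟩ := hker (φ u • w - φ w • u) (by simp [mul_comm])
    have hprop : φ u * ψ w - φ w * ψ u = 0 := by
      have := congrArg ψ hc
      simpa [hψv] using this.symm
    have hφu0 : φ u = 0 := by
      by_contra hne
      have : 0 < φ u := lt_of_le_of_ne hφu (Ne.symm hne)
      nlinarith [mul_pos this (neg_pos.2 hψw), mul_nonneg hφw hψu.le]
    obtain ⟨d, hd⟩ := hker u hφu0
    rw [← hd, map_smul, hψv, smul_zero] at hψu
    exact lt_irrefl _ hψu
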